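/- Discrete terminated convergence. Let ω be a regular averaging kernel with Δ-discretization ω̂, and let (hf, hg) ∈ 𝒳² satisfy the strictly positive gap condition with A(hf, hg) > Δ‖ω‖∞. Then for the one-sided termination of the discrete spatially coupled recursion with any initial condition f⁰ : {x_i = iΔ} → [0,1], f^t(x_i) → 0 as t → ∞ for every i. -/

import Mathlib

open MeasureTheory Filter Set

noncomputable section

/-- Convolution `(f ⊗ ω)(x) = ∫ y, f y · ω (x − y)`. -/
def conv (f ω : ℝ → ℝ) (x : ℝ) : ℝ := ∫ y : ℝ, f y * ω (x - y)

/-- `ω` is an averaging kernel: even, nonnegative, of bounded variation, integrating to 1. -/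
def IsAveragingKernel (ω : ℝ → ℝ) : Prop :=
  (∀ x, ω (-x) = ω x) ∧ (∀ x, 0 ≤ ω x) ∧ BoundedVariationOn ω Set.univ ∧
    MeasureTheory.Integrable ω ∧ (∫ x : ℝ, ω x) = 1

/-- The essential supremum `‖ω‖∞` of a kernel, as a real number. -/
def kerSup (ω : ℝ → ℝ) : ℝ := (eLpNorm ω ⊤ MeasureTheory.volume).toReal

/-- `ω` is regular: for some `W ∈ (0,∞]`, it vanishes outside `[−W, W]` and is
positive on `(−W, W)` (the case `W = ∞` being that `ω` is everywhere positive). -/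
def IsRegularKernel (ω : ℝ → ℝ) : Prop :=
  (∀ x, 0 < ω x) ∨
    ∃ W : ℝ, 0 < W ∧ (∀ x, W < |x| → ω x = 0) ∧ (∀ x, |x| < W → 0 < ω x)

/-- Membership in `𝒳`: nondecreasing self-maps of `[0,1]`. -/
def MemX (h : ℝ → ℝ) : Prop :=
  MonotoneOn h (Icc 0 1) ∧ MapsTo h (Icc 0 1) (Icc 0 1)

/-- Left limit `h(u−)` of `h ∈ 𝒳` at `u ∈ [0,1]`, with the convention `h(0−) = 0`. -/
def lm (h : ℝ → ℝ) (u : ℝ) : ℝ := if u ≤ 0 then 0 else sSup (h '' Ico 0 u)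

/-- Right limit `h(u+)` of `h ∈ 𝒳` at `u ∈ [0,1]`, with the convention `h(1+) = 1`. -/
def rm (h : ℝ → ℝ) (u : ℝ) : ℝ := if 1 ≤ u then 1 else sInf (h '' Ioc u 1)

/-- A canonical generalized inverse of `h ∈ 𝒳` (any valid inverse has the same integrals,
so the potential below is unambiguous). -/
def Xinv (h : ℝ → ℝ) (v : ℝ) : ℝ := sInf ({1} ∪ {u ∈ Icc (0:ℝ) 1 | v ≤ h u})

/-- The potential `Φ(hf, hg; u, v) = ∫₀ᵘ hg⁻¹ + ∫₀ᵛ hf⁻¹ − u·v`. -/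
def Pot (hf hg : ℝ → ℝ) (u v : ℝ) : ℝ :=
  (∫ x in (0:ℝ)..u, Xinv hg x) + (∫ x in (0:ℝ)..v, Xinv hf x) - u * v

/-- `A(hf, hg) = Φ(hf, hg; 1, 1)`. -/
def Agap (hf hg : ℝ → ℝ) : ℝ := Pot hf hg 1 1

/-- `(u,v)` is a crossing point of `(hf, hg)`:
`u ∈ [hg(v−), hg(v+)]` and `v ∈ [hf(u−), hf(u+)]`. -/
def IsCrossing (hf hg : ℝ → ℝ) (u v : ℝ) : Prop :=
  u ∈ Icc (0:ℝ) 1 ∧ v ∈ Icc (0:ℝ) 1 ∧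
    u ∈ Icc (lm hg v) (rm hg v) ∧ v ∈ Icc (lm hf u) (rm hf u)

/-- The strictly positive gap condition: there is a nontrivial crossing point, and every
nontrivial crossing point satisfies `Φ(hf, hg; u, v) > max {0, A(hf, hg)}`. -/
def StrictPosGap (hf hg : ℝ → ℝ) : Prop :=
  (∃ u v, IsCrossing hf hg u v ∧ ¬(u = 0 ∧ v = 0) ∧ ¬(u = 1 ∧ v = 1)) ∧
    ∀ u v, IsCrossing hf hg u v → ¬(u = 0 ∧ v = 0) → ¬(u = 1 ∧ v = 1) →
      max 0 (Agap hf hg) < Pot hf hg u v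

/-- Membership in `Ψ`: nondecreasing functions `ℝ → [0,1]`. -/
def MemPsi (f : ℝ → ℝ) : Prop := Monotone f ∧ ∀ x, f x ∈ Icc (0:ℝ) 1

/-- `f` is `(a,b)`-interpolating: limits `a` at `−∞` and `b` at `+∞`. -/
def Interpolates (f : ℝ → ℝ) (a b : ℝ) : Prop :=
  Filter.Tendsto f Filter.atBot (nhds a) ∧ Filter.Tendsto f Filter.atTop (nhds b)

/-- The `Δ`-discretization `ω̂ᵢ = ∫_{(i−1/2)Δ}^{(i+1/2)Δ} ω(z) dz` of a kernel. -/
def dker (ω : ℝ → ℝ) (Δ : ℝ) (i : ℤ) : ℝ :=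
  ∫ z in (((i : ℝ) - 1/2) * Δ)..(((i : ℝ) + 1/2) * Δ), ω z

/-- Discrete convolution `(f ⊗ ω̂)(xᵢ) = Σⱼ ω̂_{i−j} f(xⱼ)`. -/
def dconv (f : ℤ → ℝ) (ωh : ℤ → ℝ) (i : ℤ) : ℝ := ∑' j : ℤ, ωh (i - j) * f j

/-- Kernel facts used by the proof. -/
structure PK (p : ℤ → ℝ) (C : ℝ) : Prop where
  nonneg : ∀ n, 0 ≤ p n
  sum : HasSum p 1
  even : ∀ n, p (-n) = p n
  le : ∀ n, p n ≤ C

/-- `y` lies on the completed graph of `h` at `x`. -/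
def GRel (h : ℝ → ℝ) (x y : ℝ) : Prop :=
  (∀ w ∈ Icc (0:ℝ) 1, w < x → h w ≤ y) ∧ (∀ w ∈ Icc (0:ℝ) 1, x < w → y ≤ h w)

lemma GRel.lim {h : ℝ → ℝ} {ι : Type*} {l : Filter ι} [l.NeBot] {x y : ι → ℝ} {x0 y0 : ℝ}
    (hx : Tendsto x l (nhds x0)) (hy : Tendsto y l (nhds y0))
    (hR : ∀ᶠ t in l, GRel h (x t) (y t)) : GRel h x0 y0 := by
  refine ⟨fun w hw hlt => ?_, fun w hw hlt => ?_⟩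
  · refine ge_of_tendsto hy ?_
    filter_upwards [hR, hx.eventually_const_lt hlt] with t h1 h2 using h1.1 w hw h2
  · refine le_of_tendsto hy ?_
    filter_upwards [hR, hx.eventually_lt_const hlt] with t h1 h2 using h1.2 w hw h2

lemma GRel.self {h : ℝ → ℝ} (hh : MemX h) {x : ℝ} (hx : x ∈ Icc (0:ℝ) 1) : GRel h x (h x) :=
  ⟨fun _ hw hlt => hh.1 hw hx hlt.le, fun _ hw hlt => hh.1 hx hw hlt.le⟩

lemma GRel.mem {h : ℝ → ℝ} (hh : MemX h) {x y : ℝ} (hx : x ∈ Icc (0:ℝ) 1)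
    (hy : y ∈ Icc (0:ℝ) 1) (hR : GRel h x y) : y ∈ Icc (lm h x) (rm h x) := by
  constructor
  · unfold lm
    split_ifs with h0
    · exact hy.1
    · push Not at h0
      refine csSup_le (Set.Nonempty.image _ ⟨0, le_refl _, h0⟩) ?_
      rintro _ ⟨w, hw, rfl⟩
      exact hR.1 w ⟨hw.1, hw.2.le.trans hx.2⟩ hw.2
  · unfold rm
    split_ifs with h0
    · exact hy.2
    · push Not at h0
      refine le_csInf (Set.Nonempty.image _ ⟨1, h0, le_refl _⟩) ?_
      rintro _ ⟨w, hw, rfl⟩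
      exact hR.2 w ⟨hx.1.trans hw.1.le, hw.2⟩ hw.1

lemma Xinv_bdd (h : ℝ → ℝ) (v : ℝ) : BddBelow ({1} ∪ {u ∈ Icc (0:ℝ) 1 | v ≤ h u}) := by
  refine ⟨0, ?_⟩
  rintro u (rfl | hu)
  · exact zero_le_one
  · exact hu.1.1

lemma Xinv_mono (h : ℝ → ℝ) : Monotone (Xinv h) := by
  intro a b hab
  refine csInf_le_csInf (Xinv_bdd h a) ⟨1, Or.inl rfl⟩ ?_
  rintro u (hu | hu)
  · exact Or.inl hu
  · exact Or.inr ⟨hu.1, hab.trans hu.2⟩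

lemma Xinv_le {h : ℝ → ℝ} {x y z : ℝ} (hx : x ∈ Icc (0:ℝ) 1) (hR : GRel h x y) (hz : z ≤ y) :
    Xinv h z ≤ x := by
  rcases eq_or_lt_of_le hx.2 with h1 | h1
  · rw [h1]; exact csInf_le (Xinv_bdd h z) (Or.inl rfl)
  · refine le_of_forall_gt_imp_ge_of_dense fun w hw => ?_
    rcases le_or_gt w 1 with hw1 | hw1
    · exact csInf_le (Xinv_bdd h z)
        (Or.inr ⟨⟨hx.1.trans hw.le, hw1⟩, hz.trans (hR.2 w ⟨hx.1.trans hw.le, hw1⟩ hw)⟩)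
    · exact (csInf_le (Xinv_bdd h z) (Or.inl rfl)).trans hw1.le

lemma Xinv_int_le {h : ℝ → ℝ} {x y a : ℝ} (hx : x ∈ Icc (0:ℝ) 1) (hR : GRel h x y) (ha : a ≤ y) :
    ∫ z in a..y, Xinv h z ≤ (y - a) * x := by
  have := intervalIntegral.integral_mono_on (μ := volume) (f := Xinv h) (g := fun _ => x) ha
    (Xinv_mono h).intervalIntegrable intervalIntegrable_const
    (fun z hz => Xinv_le hx hR hz.2)
  simpa using this

lemma int_sum {h : ℝ → ℝ} {x y : ℤ → ℝ} {m : ℤ} {E : ℝ} (hy : Monotone y)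
    (hx : ∀ i, x i ∈ Icc (0:ℝ) 1) (hR : ∀ i, m < i → GRel h (x i) (y i))
    (h0 : ∫ z in (0:ℝ)..(y m), Xinv h z ≤ E) (k : ℕ) :
    ∫ z in (0:ℝ)..(y (m + k)), Xinv h z ≤
      E + ∑ i ∈ Finset.Ioc m (m + k), (y i - y (i - 1)) * x i := by
  induction k with
  | zero => simpa using h0
  | succ k ih =>
    have e : Finset.Ioc m (m + ((k + 1 : ℕ) : ℤ)) = insert (m + k + 1) (Finset.Ioc m (m + k)) := by
      ext i; simp; omega
    rw [e, Finset.sum_insert (by simp)]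
    have e2 : m + ((k + 1 : ℕ) : ℤ) = m + k + 1 := by push_cast; ring
    have := Xinv_int_le (h := h) (hx (m + k + 1)) (hR (m + k + 1) (by omega))
      (hy (show m + k ≤ m + k + 1 by omega))
    rw [e2, ← intervalIntegral.integral_add_adjacent_intervals
      ((Xinv_mono h).intervalIntegrable (a := 0) (b := y (m + k)))
      ((Xinv_mono h).intervalIntegrable)]
    have e3 : m + (k:ℤ) + 1 - 1 = m + k := by ring
    rw [e3]
    linarith

lemma tele (c : ℤ → ℝ) (m : ℤ) (k : ℕ) :
    ∑ i ∈ Finset.Ioc m (m + k), (c i - c (i - 1)) = c (m + k) - c m := by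
  induction k with
  | zero => simp
  | succ k ih =>
    have e : Finset.Ioc m (m + ((k + 1 : ℕ) : ℤ)) = insert (m + k + 1) (Finset.Ioc m (m + k)) := by
      ext i; simp; omega
    rw [e, Finset.sum_insert (by simp), ih]
    have e2 : m + ((k + 1 : ℕ) : ℤ) = m + k + 1 := by push_cast; ring
    have e3 : m + (k:ℤ) + 1 - 1 = m + k := by ring
    rw [e2, e3]; ring

lemma exists_Ioc (I : Finset ℤ) : ∃ (m : ℤ) (k : ℕ), I ⊆ Finset.Ioc m (m + k) := by
  obtain ⟨a, ha⟩ := I.bddBelow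
  obtain ⟨b, hb⟩ := I.bddAbove
  refine ⟨a - 1, (b - a + 1).toNat, fun i hi => ?_⟩
  have h1 := ha hi
  have h2 := hb hi
  simp only [Finset.mem_Ioc]; omega

lemma sum_diff_le {c : ℤ → ℝ} (hc : Monotone c) (h01 : ∀ i, c i ∈ Icc (0:ℝ) 1) (I : Finset ℤ) :
    ∑ i ∈ I, (c i - c (i - 1)) ≤ 1 := by
  obtain ⟨m, k, hI⟩ := exists_Ioc I
  refine (Finset.sum_le_sum_of_subset_of_nonneg hI
    fun i _ _ => sub_nonneg.2 (hc (by omega))).trans ?_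
  rw [tele]
  linarith [(h01 (m + k)).2, (h01 m).1]

section kern
variable {p : ℤ → ℝ} {C : ℝ}

lemma PK.summ (hp : PK p C) {f : ℤ → ℝ} (hf : ∀ i, f i ∈ Icc (0:ℝ) 1) (e : ℤ → ℤ) :
    Summable fun n => p n * f (e n) :=
  Summable.of_nonneg_of_le (fun n => mul_nonneg (hp.nonneg n) (hf _).1)
    (fun n => mul_le_of_le_one_right (hp.nonneg n) (hf _).2) hp.sum.summable

lemma dconv_eq (p f : ℤ → ℝ) (i : ℤ) : dconv f p i = ∑' n, p n * f (i - n) := by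
  unfold dconv
  rw [← (Equiv.subLeft i).tsum_eq]
  simp

lemma PK.dconv_eq' (hp : PK p C) (f : ℤ → ℝ) (i : ℤ) :
    dconv f p i = ∑' n, p n * f (i + n) := by
  rw [dconv_eq, ← (Equiv.neg ℤ).tsum_eq]
  simp [hp.even]

lemma PK.dconv_mem (hp : PK p C) {f : ℤ → ℝ} (hf : ∀ i, f i ∈ Icc (0:ℝ) 1) (i : ℤ) :
    dconv f p i ∈ Icc (0:ℝ) 1 := by
  rw [dconv_eq]
  refine ⟨tsum_nonneg fun n => mul_nonneg (hp.nonneg n) (hf _).1, ?_⟩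
  rw [← hp.sum.tsum_eq]
  exact (hp.summ hf _).tsum_le_tsum (fun n => mul_le_of_le_one_right (hp.nonneg n) (hf _).2)
    hp.sum.summable

lemma PK.dconv_le (hp : PK p C) {f g : ℤ → ℝ} (hf : ∀ i, f i ∈ Icc (0:ℝ) 1)
    (hg : ∀ i, g i ∈ Icc (0:ℝ) 1) (hfg : ∀ i, f i ≤ g i) (i : ℤ) :
    dconv f p i ≤ dconv g p i := by
  rw [dconv_eq, dconv_eq]
  exact (hp.summ hf _).tsum_le_tsum
    (fun n => mul_le_mul_of_nonneg_left (hfg _) (hp.nonneg n)) (hp.summ hg _)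

lemma PK.dconv_mono (hp : PK p C) {f : ℤ → ℝ} (hf : ∀ i, f i ∈ Icc (0:ℝ) 1)
    (hm : Monotone f) : Monotone (dconv f p) := by
  intro i j hij
  rw [dconv_eq, dconv_eq]
  exact (hp.summ hf _).tsum_le_tsum
    (fun n => mul_le_mul_of_nonneg_left (hm (by omega)) (hp.nonneg n)) (hp.summ hf _)

lemma PK.dconv_lim (hp : PK p C) {ι : Type*} {l : Filter ι} [l.NeBot] {f : ι → ℤ → ℝ} {e : ι → ℤ}
    {F : ℤ → ℝ} (hf : ∀ t i, f t i ∈ Icc (0:ℝ) 1)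
    (hF : ∀ n, Tendsto (fun t => f t (e t - n)) l (nhds (F n))) :
    Tendsto (fun t => dconv (f t) p (e t)) l (nhds (∑' n, p n * F n)) := by
  simp only [dconv_eq]
  refine tendsto_tsum_of_dominated_convergence hp.sum.summable
    (fun n => (hF n).const_mul (p n)) (Filter.Eventually.of_forall fun t n => ?_)
  rw [Real.norm_of_nonneg (mul_nonneg (hp.nonneg n) (hf _ _).1)]
  exact mul_le_of_le_one_right (hp.nonneg n) (hf _ _).2

/-- Core double-sum estimate. -/
lemma PK.core (hp : PK p C) {f g : ℤ → ℝ} {a b : ℝ} (hf : ∀ i, f i ∈ Icc (0:ℝ) 1)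
    (hg : ∀ i, g i ∈ Icc (0:ℝ) 1) (hfm : Monotone f) (hgm : Monotone g)
    (hfa : ∀ i, f i ≤ a) (hgb : ∀ i, g i ≤ b) (I K : Finset ℤ) :
    ∑ i ∈ I, (f i - f (i - 1)) * dconv g p i + ∑ i ∈ K, (g i - g (i - 1)) * dconv f p i
      ≤ a * b + C := by
  set α : ℤ → ℝ := fun i => f i - f (i - 1) with hα
  set β : ℤ → ℝ := fun i => g i - g (i - 1) with hβ
  have α0 : ∀ i, 0 ≤ α i := fun i => sub_nonneg.2 (hfm (by omega))
  have β0 : ∀ i, 0 ≤ β i := fun i => sub_nonneg.2 (hgm (by omega))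
  have αs : Summable α := summable_of_sum_le α0 (sum_diff_le hfm hf)
  have βs : Summable β := summable_of_sum_le β0 (sum_diff_le hgm hg)
  have αt : ∑' i, α i ≤ 1 := αs.tsum_le_of_sum_le (sum_diff_le hfm hf)
  have βt : ∑' i, β i ≤ 1 := βs.tsum_le_of_sum_le (sum_diff_le hgm hg)
  have C0 : 0 ≤ C := (hp.nonneg 0).trans (hp.le 0)
  have prodS : Summable fun x : ℤ × ℤ => α x.1 * β x.2 := αs.mul_of_nonneg βs α0 β0
  let ee : ℤ × ℤ ≃ ℤ × ℤ :=
    { toFun := fun x => (x.2, x.2 + x.1)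
      invFun := fun x => (x.2 - x.1, x.1)
      left_inv := fun x => by ext <;> simp
      right_inv := fun x => by ext <;> simp }
  have S2 : Summable fun x : ℤ × ℤ => α x.2 * β (x.2 + x.1) := ee.summable_iff.2 prodS
  have S2t : ∑' x : ℤ × ℤ, α x.2 * β (x.2 + x.1) ≤ 1 := by
    have : ∑' x : ℤ × ℤ, α x.2 * β (x.2 + x.1) = ∑' x : ℤ × ℤ, α x.1 * β x.2 :=
      ee.tsum_eq (fun x : ℤ × ℤ => α x.1 * β x.2)
    rw [this, ← αs.tsum_mul_tsum βs prodS]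
    exact mul_le_one₀ αt (tsum_nonneg β0) βt
  set S : ℤ → ℝ := fun n => ∑' i, α i * β (i + n) with hS
  have Ssum : Summable S := S2.prod
  have St : ∑' n, S n ≤ 1 := by
    rw [← S2.tsum_prod]; exact S2t
  have Sin : ∀ n, Summable fun i => α i * β (i + n) := fun n => S2.prod_factor n
  have S0 : ∀ n, 0 ≤ S n := fun n => tsum_nonneg fun i => mul_nonneg (α0 _) (β0 _)
  have br : ∀ n, ∑ i ∈ I, α i * g (i + n) + ∑ k ∈ K, β k * f (k - n) ≤ a * b + S n := by
    intro n
    obtain ⟨m, k, hIK⟩ := exists_Ioc (I ∪ K.image (fun j => j - n))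
    have h1 : ∑ i ∈ I, α i * g (i + n) ≤ ∑ i ∈ Finset.Ioc m (m + k), α i * g (i + n) :=
      Finset.sum_le_sum_of_subset_of_nonneg (Finset.union_subset_left hIK)
        fun i _ _ => mul_nonneg (α0 _) (hg _).1
    have h2 : ∑ k ∈ K, β k * f (k - n) ≤ ∑ i ∈ Finset.Ioc m (m + k), β (i + n) * f i := by
      have : ∑ k ∈ K, β k * f (k - n) = ∑ i ∈ K.image (fun j => j - n), β (i + n) * f i := by
        rw [Finset.sum_image (by intro x _ y _ h; simpa using h)]
        simp
      rw [this]
      exact Finset.sum_le_sum_of_subset_of_nonneg (Finset.union_subset_right hIK)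
        fun i _ _ => mul_nonneg (β0 _) (hf _).1
    have h3 := tele (fun i => f i * g (i + n)) m k
    have h4 : ∑ i ∈ Finset.Ioc m (m + k), α i * β (i + n) ≤ S n :=
      (Sin n).sum_le_tsum _ fun i _ => mul_nonneg (α0 _) (β0 _)
    have h5 : ∑ i ∈ Finset.Ioc m (m + k), α i * g (i + n)
        + ∑ i ∈ Finset.Ioc m (m + k), β (i + n) * f i =
        ∑ i ∈ Finset.Ioc m (m + k), (f i * g (i + n) - f (i - 1) * g (i - 1 + n))
        + ∑ i ∈ Finset.Ioc m (m + k), α i * β (i + n) := by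
      rw [← Finset.sum_add_distrib, ← Finset.sum_add_distrib]
      refine Finset.sum_congr rfl fun i _ => ?_
      have : i + n - 1 = i - 1 + n := by ring
      simp only [hα, hβ, this]; ring
    have h6 : f (m + k) * g (m + k + n) ≤ a * b :=
      mul_le_mul (hfa _) (hgb _) (hg _).1 ((hf 0).1.trans (hfa 0))
    have h7 : 0 ≤ f m * g (m + n) := mul_nonneg (hf _).1 (hg _).1
    linarith
  have e1 : ∑ i ∈ I, α i * dconv g p i + ∑ i ∈ K, β i * dconv f p i =
      ∑' n, p n * (∑ i ∈ I, α i * g (i + n) + ∑ k ∈ K, β k * f (k - n)) := by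
    have s1 : ∀ i ∈ I, Summable fun n => α i * (p n * g (i + n)) :=
      fun i _ => (hp.summ hg _).mul_left _
    have s2 : ∀ i ∈ K, Summable fun n => β i * (p n * f (i - n)) :=
      fun i _ => (hp.summ hf _).mul_left _
    have t1 : ∑ i ∈ I, α i * dconv g p i = ∑' n, ∑ i ∈ I, α i * (p n * g (i + n)) := by
      rw [Summable.tsum_finsetSum s1]
      exact Finset.sum_congr rfl fun i _ => by rw [hp.dconv_eq', tsum_mul_left]
    have t2 : ∑ i ∈ K, β i * dconv f p i = ∑' n, ∑ i ∈ K, β i * (p n * f (i - n)) := by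
      rw [Summable.tsum_finsetSum s2]
      exact Finset.sum_congr rfl fun i _ => by rw [dconv_eq, tsum_mul_left]
    rw [t1, t2, ← (summable_sum s1).tsum_add (summable_sum s2)]
    refine tsum_congr fun n => ?_
    rw [mul_add, Finset.mul_sum, Finset.mul_sum]
    congr 1 <;> exact Finset.sum_congr rfl fun i _ => by ring
  rw [e1]
  have R : HasSum (fun n => p n * (a * b) + C * S n) (1 * (a * b) + C * ∑' n, S n) :=
    (hp.sum.mul_right _).add (Ssum.hasSum.mul_left _)
  have le : ∀ n, p n * (∑ i ∈ I, α i * g (i + n) + ∑ k ∈ K, β k * f (k - n)) ≤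
      p n * (a * b) + C * S n := fun n => by
    have h1 := mul_le_mul_of_nonneg_left (br n) (hp.nonneg n)
    have h2 := mul_le_mul_of_nonneg_right (hp.le n) (S0 n)
    linarith
  have nn : ∀ n, 0 ≤ p n * (∑ i ∈ I, α i * g (i + n) + ∑ k ∈ K, β k * f (k - n)) := fun n =>
    mul_nonneg (hp.nonneg n) (add_nonneg
      (Finset.sum_nonneg fun i _ => mul_nonneg (α0 _) (hg _).1)
      (Finset.sum_nonneg fun i _ => mul_nonneg (β0 _) (hf _).1))
  have := (Summable.of_nonneg_of_le nn le R.summable).tsum_le_tsum le R.summable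
  rw [R.tsum_eq] at this
  nlinarith

end kern

lemma PK.of {ω : ℝ → ℝ} {Δ : ℝ} (hΔ : 0 < Δ) (hω : IsAveragingKernel ω) :
    PK (dker ω Δ) (Δ * kerSup ω) := by
  obtain ⟨hev, hnn, hbv, hint, h1⟩ := hω
  have hle : ∀ i : ℤ, ((i : ℝ) - 1/2) * Δ ≤ ((i : ℝ) + 1/2) * Δ := fun i => by nlinarith
  have hfin : eLpNorm ω ⊤ volume < ⊤ := by
    refine eLpNormEssSup_lt_top_of_ae_bound (C := |ω 0| + (eVariationOn ω univ).toReal)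
      (Filter.Eventually.of_forall fun x => ?_)
    have := hbv.dist_le (mem_univ x) (mem_univ 0)
    rw [Real.dist_eq] at this
    rw [Real.norm_eq_abs]
    have h3 := abs_sub_abs_le_abs_sub (ω x) (ω 0)
    linarith
  have hae : ∀ᵐ x, ω x ≤ kerSup ω := by
    have := ae_le_eLpNormEssSup (f := ω) (μ := volume)
    filter_upwards [this] with x hx
    rw [← eLpNorm_exponent_top] at hx
    have h2 := ENNReal.toReal_mono hfin.ne hx
    simp only [toReal_enorm] at h2
    exact (le_abs_self _).trans h2
  refine ⟨fun n => intervalIntegral.integral_nonneg (hle n) fun x _ => hnn x, ?_, ?_, ?_⟩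
  · have hs : Integrable fun z => ω (z * Δ) := hint.comp_mul_right' hΔ.ne'
    have := hs.hasSum_intervalIntegral (-1/2)
    have h2 := this.mul_right Δ
    have e : (∫ z, ω (z * Δ)) * Δ = 1 := by
      rw [Measure.integral_comp_mul_right, h1, abs_of_pos (inv_pos.2 hΔ)]
      simp [hΔ.ne']
    rw [e] at h2
    refine (congrArg (fun q : ℤ → ℝ => HasSum q 1) (funext fun n => ?_)).mpr h2
    rw [intervalIntegral.integral_comp_mul_right _ hΔ.ne']
    unfold dker
    rw [smul_eq_mul, mul_right_comm, inv_mul_cancel₀ hΔ.ne', one_mul]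
    congr 1 <;> ring
  · intro n
    unfold dker
    have := intervalIntegral.integral_comp_neg (a := (((-n : ℤ) : ℝ) - 1/2) * Δ)
      (b := (((-n : ℤ) : ℝ) + 1/2) * Δ) ω
    simp only [hev] at this
    rw [this]
    push_cast
    congr 1 <;> ring
  · intro n
    unfold dker
    have := intervalIntegral.integral_mono_ae (μ := volume) (f := ω) (g := fun _ => kerSup ω) (hle n)
      hint.intervalIntegrable (by simp) hae
    refine this.trans (le_of_eq ?_)
    rw [intervalIntegral.integral_const, smul_eq_mul]; ring


/-- One step of the terminated recursion. -/
def stepG (hg : ℝ → ℝ) (p f : ℤ → ℝ) : ℤ → ℝ := fun i => hg (dconv f p i)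

/-- One step of the terminated recursion. -/
def stepF (hf : ℝ → ℝ) (p g : ℤ → ℝ) : ℤ → ℝ := fun i => if i < 0 then 0 else hf (dconv g p i)

/-- The recursion started from the all-one profile. -/
def topF (hf hg : ℝ → ℝ) (p : ℤ → ℝ) : ℕ → ℤ → ℝ
  | 0 => fun _ => 1
  | t + 1 => stepF hf p (stepG hg p (topF hf hg p t))

section steps
variable {p : ℤ → ℝ} {C : ℝ} {hf hg : ℝ → ℝ}

lemma stepG_mem (hp : PK p C) (hh : MemX hg) {f : ℤ → ℝ} (h : ∀ i, f i ∈ Icc (0:ℝ) 1) (i : ℤ) :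
    stepG hg p f i ∈ Icc (0:ℝ) 1 := hh.2 (hp.dconv_mem h i)

lemma stepF_mem (hp : PK p C) (hh : MemX hf) {f : ℤ → ℝ} (h : ∀ i, f i ∈ Icc (0:ℝ) 1) (i : ℤ) :
    stepF hf p f i ∈ Icc (0:ℝ) 1 := by
  unfold stepF
  split_ifs
  · simp
  · exact hh.2 (hp.dconv_mem h i)

lemma stepG_le (hp : PK p C) (hh : MemX hg) {f g : ℤ → ℝ} (h : ∀ i, f i ∈ Icc (0:ℝ) 1)
    (h' : ∀ i, g i ∈ Icc (0:ℝ) 1) (hl : ∀ i, f i ≤ g i) (i : ℤ) :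
    stepG hg p f i ≤ stepG hg p g i :=
  hh.1 (hp.dconv_mem h i) (hp.dconv_mem h' i) (hp.dconv_le h h' hl i)

lemma stepF_le (hp : PK p C) (hh : MemX hf) {f g : ℤ → ℝ} (h : ∀ i, f i ∈ Icc (0:ℝ) 1)
    (h' : ∀ i, g i ∈ Icc (0:ℝ) 1) (hl : ∀ i, f i ≤ g i) (i : ℤ) :
    stepF hf p f i ≤ stepF hf p g i := by
  unfold stepF
  split_ifs
  · exact le_rfl
  · exact stepG_le hp hh h h' hl i

lemma stepG_mono (hp : PK p C) (hh : MemX hg) {f : ℤ → ℝ} (h : ∀ i, f i ∈ Icc (0:ℝ) 1)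
    (hm : Monotone f) : Monotone (stepG hg p f) := fun i j hij =>
  hh.1 (hp.dconv_mem h i) (hp.dconv_mem h j) (hp.dconv_mono h hm hij)

lemma stepF_mono (hp : PK p C) (hh : MemX hf) {f : ℤ → ℝ} (h : ∀ i, f i ∈ Icc (0:ℝ) 1)
    (hm : Monotone f) : Monotone (stepF hf p f) := fun i j hij => by
  unfold stepF
  split_ifs with h1 h2 h2
  · exact le_rfl
  · exact (hh.2 (hp.dconv_mem h j)).1
  · omega
  · exact stepG_mono hp hh h hm hij

lemma topF_mem (hp : PK p C) (hhf : MemX hf) (hhg : MemX hg) (t : ℕ) (i : ℤ) :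
    topF hf hg p t i ∈ Icc (0:ℝ) 1 := by
  induction t generalizing i with
  | zero => simp [topF]
  | succ t ih => exact stepF_mem hp hhf (stepG_mem hp hhg ih) i

lemma topF_mono (hp : PK p C) (hhf : MemX hf) (hhg : MemX hg) (t : ℕ) :
    Monotone (topF hf hg p t) := by
  induction t with
  | zero => exact fun _ _ _ => le_rfl
  | succ t ih =>
    exact stepF_mono hp hhf (stepG_mem hp hhg (topF_mem hp hhf hhg t))
      (stepG_mono hp hhg (topF_mem hp hhf hhg t) ih)

lemma topF_succ_le (hp : PK p C) (hhf : MemX hf) (hhg : MemX hg) (t : ℕ) (i : ℤ) :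
    topF hf hg p (t + 1) i ≤ topF hf hg p t i := by
  induction t generalizing i with
  | zero => exact (topF_mem hp hhf hhg 1 i).2
  | succ t ih =>
    have m := topF_mem hp hhf hhg
    exact stepF_le hp hhf (stepG_mem hp hhg (m _)) (stepG_mem hp hhg (m _))
      (stepG_le hp hhg (m _) (m _) ih) i

lemma exists_lim {c : ℕ → ℝ} (h : ∀ t, c (t + 1) ≤ c t) (h0 : ∀ t, c t ∈ Icc (0:ℝ) 1) :
    ∃ l, Tendsto c atTop (nhds l) :=
  ⟨_, tendsto_atTop_ciInf (antitone_nat_of_succ_le h) ⟨0, by rintro _ ⟨t, rfl⟩; exact (h0 t).1⟩⟩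

lemma exists_top {c : ℤ → ℝ} (h : Monotone c) (h0 : ∀ t, c t ∈ Icc (0:ℝ) 1) :
    ∃ l ∈ Icc (0:ℝ) 1, Tendsto c atTop (nhds l) ∧ ∀ i, c i ≤ l := by
  have hb : BddAbove (range c) := ⟨1, by rintro _ ⟨t, rfl⟩; exact (h0 t).2⟩
  exact ⟨_, ⟨(h0 0).1.trans (le_ciSup hb 0), ciSup_le fun i => (h0 i).2⟩,
    tendsto_atTop_ciSup h hb, fun i => le_ciSup hb i⟩

lemma topF_tendsto (hp : PK p C) (hhf : MemX hf) (hhg : MemX hg) (hgap : StrictPosGap hf hg)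
    (hA : C < Agap hf hg) (i : ℤ) :
    Tendsto (fun t => topF hf hg p t i) atTop (nhds 0) := by
  have m := topF_mem (p := p) hp hhf hhg
  have mG : ∀ t i, stepG hg p (topF hf hg p t) i ∈ Icc (0:ℝ) 1 :=
    fun t => stepG_mem hp hhg (m t)
  choose F hF using fun i => exists_lim (c := fun t => topF hf hg p t i)
    (fun t => topF_succ_le hp hhf hhg t i) (fun t => m t i)
  choose G hG using fun i => exists_lim (c := fun t => stepG hg p (topF hf hg p t) i)
    (fun t => stepG_le hp hhg (m _) (m _) (topF_succ_le hp hhf hhg t) i) (fun t => mG t i)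
  have F01 : ∀ i, F i ∈ Icc (0:ℝ) 1 := fun i => isClosed_Icc.mem_of_tendsto (hF i)
    (Filter.Eventually.of_forall fun t => m t i)
  have G01 : ∀ i, G i ∈ Icc (0:ℝ) 1 := fun i => isClosed_Icc.mem_of_tendsto (hG i)
    (Filter.Eventually.of_forall fun t => mG t i)
  have Fm : Monotone F := fun i j hij => le_of_tendsto_of_tendsto' (hF i) (hF j)
    fun t => topF_mono hp hhf hhg t hij
  have Gm : Monotone G := fun i j hij => le_of_tendsto_of_tendsto' (hG i) (hG j)
    fun t => stepG_mono hp hhg (m t) (topF_mono hp hhf hhg t) hij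
  have Fneg : ∀ i < 0, F i = 0 := fun i hi => by
    refine tendsto_nhds_unique ((tendsto_add_atTop_iff_nat 1).2 (hF i)) ?_
    have : (fun t => topF hf hg p (t + 1) i) = fun _ => 0 := by
      funext t; simp [topF, stepF, hi]
    rw [this]; exact tendsto_const_nhds
  have RG : ∀ i, GRel hg (dconv F p i) (G i) := fun i => by
    have h1 := hp.dconv_lim (l := atTop) (e := fun _ : ℕ => i) (F := fun n => F (i - n)) m
      (fun n => hF (i - n))
    rw [← dconv_eq] at h1
    exact GRel.lim h1 (hG i) (Filter.Eventually.of_forall fun t =>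
      GRel.self hhg (hp.dconv_mem (m t) i))
  have RF : ∀ i, -1 < i → GRel hf (dconv G p i) (F i) := fun i hi => by
    have h1 := hp.dconv_lim (l := atTop) (e := fun _ : ℕ => i) (F := fun n => G (i - n)) mG
      (fun n => hG (i - n))
    rw [← dconv_eq] at h1
    refine GRel.lim h1 ((tendsto_add_atTop_iff_nat 1).2 (hF i))
      (Filter.Eventually.of_forall fun t => ?_)
    have : topF hf hg p (t + 1) i = hf (dconv (stepG hg p (topF hf hg p t)) p i) := by
      simp [topF, stepF, show ¬ i < 0 by omega]
    rw [this]
    exact GRel.self hhf (hp.dconv_mem (mG t) i)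
  obtain ⟨v, v01, Fv, Fle⟩ := exists_top Fm F01
  obtain ⟨u, u01, Gu, Gle⟩ := exists_top Gm G01
  have sh : ∀ n : ℤ, Tendsto (fun i : ℤ => i - n) atTop atTop := fun n =>
    tendsto_atTop_add_const_right _ (-n) tendsto_id
  have cF : Tendsto (dconv F p) atTop (nhds v) := by
    have := hp.dconv_lim (l := atTop) (f := fun _ : ℤ => F) (e := id) (F := fun _ => v)
      (fun _ => F01) (fun n => Fv.comp (sh n))
    rwa [tsum_mul_right, hp.sum.tsum_eq, one_mul] at this
  have cG : Tendsto (dconv G p) atTop (nhds u) := by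
    have := hp.dconv_lim (l := atTop) (f := fun _ : ℤ => G) (e := id) (F := fun _ => u)
      (fun _ => G01) (fun n => Gu.comp (sh n))
    rwa [tsum_mul_right, hp.sum.tsum_eq, one_mul] at this
  have cF0 : Tendsto (dconv F p) atBot (nhds 0) := by
    have F0 : Tendsto F atBot (nhds 0) := by
      refine tendsto_const_nhds.congr' ?_
      filter_upwards [eventually_lt_atBot (0:ℤ)] with i hi using (Fneg i hi).symm
    have := hp.dconv_lim (l := atBot) (f := fun _ : ℤ => F) (e := id) (F := fun _ => 0)
      (fun _ => F01) (fun n => F0.comp (tendsto_atBot_add_const_right _ (-n) tendsto_id))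
    simpa using this
  have cross : IsCrossing hf hg u v :=
    ⟨u01, v01, GRel.mem hhg v01 u01 (GRel.lim cF Gu (Filter.Eventually.of_forall RG)),
      GRel.mem hhf u01 v01 (GRel.lim cG Fv
        ((eventually_gt_atTop (-1)).mono RF))⟩
  have key : ∀ N : ℕ, (∫ x in (0:ℝ)..(G N), Xinv hg x) + (∫ x in (0:ℝ)..(F N), Xinv hf x)
      ≤ v * u + C := by
    intro N
    have iF := int_sum (h := hf) (x := dconv G p) (y := F) (m := -1) (E := 0) Fm
      (hp.dconv_mem G01) RF (by rw [Fneg (-1) (by norm_num)]; simp) (N + 1)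
    have eN : (-1 : ℤ) + ((N + 1 : ℕ) : ℤ) = N := by push_cast; ring
    rw [eN] at iF
    have lim : Tendsto (fun M : ℕ => dconv F p (-(M:ℤ)) + (v * u + C)) atTop
        (nhds (0 + (v * u + C))) :=
      (cF0.comp (tendsto_neg_atTop_atBot.comp tendsto_natCast_atTop_atTop)).add_const _
    rw [zero_add] at lim
    refine ge_of_tendsto' lim fun M => ?_
    have hb := Xinv_int_le (a := 0) (hp.dconv_mem F01 (-(M:ℤ))) (RG (-(M:ℤ))) (G01 _).1
    have iG := int_sum (h := hg) (x := dconv F p) (y := G) (m := -(M:ℤ)) (E := dconv F p (-(M:ℤ)))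
      Gm (hp.dconv_mem F01) (fun i _ => RG i) (hb.trans (by
        rw [sub_zero]
        exact mul_le_of_le_one_left (hp.dconv_mem F01 _).1 (G01 _).2)) (M + N)
    have eM : -(M:ℤ) + ((M + N : ℕ) : ℤ) = N := by push_cast; ring
    rw [eM] at iG
    have := hp.core F01 G01 Fm Gm Fle Gle (Finset.Ioc (-1) (N:ℤ)) (Finset.Ioc (-(M:ℤ)) (N:ℤ))
    linarith
  have contX : ∀ h : ℝ → ℝ, Continuous fun b => ∫ x in (0:ℝ)..b, Xinv h x := fun h =>
    intervalIntegral.continuous_primitive (fun a b => (Xinv_mono h).intervalIntegrable) 0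
  have pot : Pot hf hg u v ≤ C := by
    have h1 : (∫ x in (0:ℝ)..u, Xinv hg x) + (∫ x in (0:ℝ)..v, Xinv hf x) ≤ v * u + C := by
      refine le_of_tendsto' (f := fun N : ℕ => (∫ x in (0:ℝ)..(G N), Xinv hg x)
        + (∫ x in (0:ℝ)..(F N), Xinv hf x)) (x := atTop) ?_ key
      exact (((contX hg).tendsto u).comp (Gu.comp tendsto_natCast_atTop_atTop)).add
        (((contX hf).tendsto v).comp (Fv.comp tendsto_natCast_atTop_atTop))
    unfold Pot; linarith
  have v0 : v = 0 := by
    by_contra hv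
    by_cases h1 : u = 1 ∧ v = 1
    · rw [h1.1, h1.2] at pot
      exact absurd pot (not_le.2 hA)
    · have := hgap.2 u v cross (fun h => hv h.2) h1
      have := (le_max_right 0 (Agap hf hg)).trans_lt this
      linarith
  have : F i = 0 := le_antisymm ((Fle i).trans v0.le) (F01 i).1
  rw [← this]; exact hF i

end steps

/-- **Discrete terminated convergence.** -/
theorem discrete_terminated_convergence
    (ω hf hg : ℝ → ℝ) (Δ : ℝ) (hΔ : 0 < Δ)
    (hω : IsAveragingKernel ω) (hreg : IsRegularKernel ω)
    (hhf : MemX hf) (hhg : MemX hg)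
    (hgap : StrictPosGap hf hg)
    (hA : Δ * kerSup ω < Agap hf hg)
    (f g : ℕ → ℤ → ℝ)
    (hrange : ∀ i, f 0 i ∈ Icc (0:ℝ) 1)
    (hrecg : ∀ t i, g t i = hg (dconv (f t) (dker ω Δ) i))
    (hrecf : ∀ t (i : ℤ), f (t + 1) i =
      if (i : ℝ) * Δ < 0 then 0 else hf (dconv (g t) (dker ω Δ) i)) :
    ∀ i : ℤ, Filter.Tendsto (fun t => f t i) Filter.atTop (nhds 0) := by
  have hp := PK.of hΔ hω
  have hsg : ∀ t, g t = stepG hg (dker ω Δ) (f t) := fun t => funext fun i => hrecg t i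
  have hsf : ∀ t, f (t + 1) = stepF hf (dker ω Δ) (g t) := fun t => funext fun i => by
    rw [hrecf]
    unfold stepF
    have : ((i : ℝ) * Δ < 0) ↔ i < 0 := by
      rw [← Int.cast_lt_zero (R := ℝ)]
      exact ⟨fun h => by by_contra h'; push Not at h'; nlinarith, fun h => by nlinarith⟩
    simp only [this]
  have m := topF_mem (p := dker ω Δ) hp hhf hhg
  have main : ∀ t, (∀ i, f t i ∈ Icc (0:ℝ) 1) ∧ ∀ i, f t i ≤ topF hf hg (dker ω Δ) t i := by
    intro t
    induction t with
    | zero => exact ⟨hrange, fun i => (hrange i).2⟩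
    | succ t ih =>
      rw [hsf, hsg]
      exact ⟨stepF_mem hp hhf (stepG_mem hp hhg ih.1),
        stepF_le hp hhf (stepG_mem hp hhg ih.1) (stepG_mem hp hhg (m t))
          (stepG_le hp hhg ih.1 (m t) ih.2)⟩
  intro i
  exact squeeze_zero (fun t => ((main t).1 i).1) (fun t => (main t).2 i)
    (topF_tendsto hp hhf hhg hgap hA i)
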